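/- arXiv:2512.04066 — 6 statements merged into one kernel-verified Lean document; each statement's English description precedes it below -/
import Mathlib

section
/- Let y : [0, ∞) → [0, ∞) be continuously differentiable and satisfy the differential inequality y'(t) ≤ −a·y(t)^p + b for all t ≥ 0, where a, b > 0 are constants and p > 1. Then for all t ≥ 0 one has y(t) ≤ (max{y(0) − (b/a)^{1/p}, 0}^{1−p} + a(p−1)t)^{−1/(p−1)} + (b/a)^{1/p}, with the conventions 1/∞ = 0 and 1/0 = ∞ (i.e., if y(0) ≤ (b/a)^{1/p} then y(t) ≤ (b/a)^{1/p} for all t ≥ 0). -/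
/-!
Let `c = (b / a) ^ (1 / p)` be the equilibrium, so that `b = a * c ^ p`. If `0 ≤ w` and
`w' = -a * w ^ p`, superadditivity of `x ↦ x ^ p` gives `(w + c)' ≥ -a * (w + c) ^ p + b`, so
`w + c` is a barrier for `y`. Raising `c` to `c + ε` makes the inequality strict at a contact point,
and `ε` is then sent to `0`. The two bounds are the barriers with `w = 0` and with `w` the solution
starting from `y 0 - c > 0`.
-/

open Set

/-- The solution of `w' = -a * w ^ p` with `w 0 = v`, for `0 < v`, found by separating variables;
it is the decaying barrier above the equilibrium. At `v = 0` it does not describe the zero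
solution, since real power sets `0 ^ (1 - p)` to `0` rather than `∞` for `1 < p`. -/
noncomputable def rpowDecay (a p v t : ℝ) : ℝ :=
  (v ^ (1 - p) + a * (p - 1) * t) ^ (-(1 / (p - 1)))

section RpowDecay

variable {a p v t : ℝ}

theorem rpowDecay_zero (hp : p ≠ 1) (hv : 0 ≤ v) : rpowDecay a p v 0 = v := by
  have hexp : -(1 / (p - 1)) = (1 - p)⁻¹ := by rw [one_div, ← inv_neg, neg_sub]
  rw [rpowDecay, mul_zero, add_zero, hexp, Real.rpow_rpow_inv hv (sub_ne_zero.2 hp.symm)]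

theorem rpowDecay_base_pos (ha : 0 ≤ a) (hp : 1 ≤ p) (hv : 0 < v) (ht : 0 ≤ t) :
    0 < v ^ (1 - p) + a * (p - 1) * t :=
  add_pos_of_pos_of_nonneg (Real.rpow_pos_of_pos hv _)
    (mul_nonneg (mul_nonneg ha (sub_nonneg.2 hp)) ht)

theorem hasDerivAt_rpowDecay (hp : p ≠ 1) (hbase : 0 < v ^ (1 - p) + a * (p - 1) * t) :
    HasDerivAt (rpowDecay a p v) (-a * rpowDecay a p v t ^ p) t := by
  have hp' : p - 1 ≠ 0 := sub_ne_zero.2 hp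
  have hlinear : HasDerivAt (fun s => v ^ (1 - p) + a * (p - 1) * s) (a * (p - 1)) t := by
    simpa using ((hasDerivAt_id t).const_mul (a * (p - 1))).const_add (v ^ (1 - p))
  have hexp : -(1 / (p - 1)) * p = -(1 / (p - 1)) - 1 := by
    field_simp
    ring
  refine (hlinear.rpow_const (p := -(1 / (p - 1))) (Or.inl hbase.ne')).congr_deriv ?_
  rw [rpowDecay, ← Real.rpow_mul hbase.le, hexp]
  field_simp

end RpowDecay

section Comparison

variable {a c p t₀ t₁ : ℝ} {y y' : ℝ → ℝ}

theorem le_add_of_deriv_right_le_neg_mul_rpow {w w' : ℝ → ℝ} (ha : 0 < a) (hc : 0 ≤ c) (hp : 1 ≤ p)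
    (hy : ContinuousOn y (Icc t₀ t₁))
    (hy' : ∀ t ∈ Ico t₀ t₁, HasDerivWithinAt y (y' t) (Ici t) t)
    (hy'_le : ∀ t ∈ Ico t₀ t₁, c < y t → y' t ≤ -a * y t ^ p + a * c ^ p)
    (hw : ContinuousOn w (Icc t₀ t₁))
    (hw' : ∀ t ∈ Ico t₀ t₁, HasDerivWithinAt w (w' t) (Ici t) t)
    (hle_w' : ∀ t ∈ Ico t₀ t₁, -a * w t ^ p ≤ w' t)
    (hw_nonneg : ∀ t ∈ Ico t₀ t₁, 0 ≤ w t)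
    (hinit : y t₀ ≤ w t₀ + c) :
    ∀ ⦃t⦄, t ∈ Icc t₀ t₁ → y t ≤ w t + c := by
  refine fun t ht => le_of_forall_pos_le_add fun ε hε => ?_
  rw [add_assoc]
  refine image_le_of_deriv_right_lt_deriv_boundary' (B := fun s => w s + (c + ε)) hy hy'
    (by linarith) (hw.add continuousOn_const) (fun s hs => (hw' s hs).add_const _)
    (fun s hs hcontact => ?_) ht
  have hws := hw_nonneg s hs
  have hgap : c ^ p < (c + ε) ^ p := Real.rpow_lt_rpow hc (by linarith) (by linarith)
  have hsuper : w s ^ p + (c + ε) ^ p ≤ y s ^ p :=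
    hcontact ▸ Real.add_rpow_le_rpow_add hws (by linarith) hp
  calc
    y' s ≤ -a * y s ^ p + a * c ^ p := hy'_le s hs (by linarith)
    _ = -(a * (y s ^ p - c ^ p)) := by ring
    _ < -(a * w s ^ p) := neg_lt_neg (mul_lt_mul_of_pos_left (by linarith) ha)
    _ = -a * w s ^ p := (neg_mul _ _).symm
    _ ≤ w' s := hle_w' s hs

theorem le_of_deriv_right_le_neg_mul_rpow (ha : 0 < a) (hc : 0 ≤ c) (hp : 1 ≤ p)
    (hy : ContinuousOn y (Icc t₀ t₁))
    (hy' : ∀ t ∈ Ico t₀ t₁, HasDerivWithinAt y (y' t) (Ici t) t)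
    (hy'_le : ∀ t ∈ Ico t₀ t₁, c < y t → y' t ≤ -a * y t ^ p + a * c ^ p)
    (hinit : y t₀ ≤ c) :
    ∀ ⦃t⦄, t ∈ Icc t₀ t₁ → y t ≤ c := by
  have hzero : -a * (0 : ℝ) ^ p = 0 := by rw [Real.zero_rpow (by linarith), mul_zero]
  simpa using le_add_of_deriv_right_le_neg_mul_rpow (w := fun _ => 0) (w' := fun _ => 0)
    ha hc hp hy hy' hy'_le continuousOn_const (fun t _ => hasDerivWithinAt_const t _ 0)
    (fun _ _ => hzero.le) (fun _ _ => le_rfl) (by simpa using hinit)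

theorem le_rpowDecay_add_of_deriv_right_le_neg_mul_rpow (ha : 0 < a) (hc : 0 ≤ c) (hp : 1 < p)
    (hy : ContinuousOn y (Icc t₀ t₁))
    (hy' : ∀ t ∈ Ico t₀ t₁, HasDerivWithinAt y (y' t) (Ici t) t)
    (hy'_le : ∀ t ∈ Ico t₀ t₁, c < y t → y' t ≤ -a * y t ^ p + a * c ^ p)
    (hinit : c < y t₀) :
    ∀ ⦃t⦄, t ∈ Icc t₀ t₁ → y t ≤ rpowDecay a p (y t₀ - c) (t - t₀) + c := by
  have hv : 0 < y t₀ - c := sub_pos.2 hinit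
  have hbase (t : ℝ) (ht : t₀ ≤ t) := rpowDecay_base_pos ha.le hp.le hv (sub_nonneg.2 ht)
  have hderiv (t : ℝ) (ht : t₀ ≤ t) :=
    (hasDerivAt_rpowDecay hp.ne' (hbase t ht)).comp_sub_const t t₀
  exact le_add_of_deriv_right_le_neg_mul_rpow ha hc hp.le hy hy' hy'_le
    (fun t ht => (hderiv t ht.1).continuousAt.continuousWithinAt)
    (fun t ht => (hderiv t ht.1).hasDerivWithinAt) (fun _ _ => le_rfl)
    (fun t ht => Real.rpow_nonneg (hbase t ht.1).le _)
    (by rw [sub_self, rpowDecay_zero hp.ne' hv.le, sub_add_cancel])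

end Comparison

theorem gronwall_extension_general {a b p : ℝ} (ha : 0 < a) (hb : 0 ≤ b) (hp : 1 < p)
    {y y' : ℝ → ℝ}
    (hy : ContinuousOn y (Ici 0))
    (hy' : ∀ t, 0 ≤ t → HasDerivWithinAt y (y' t) (Ici t) t)
    (hineq : ∀ t, 0 ≤ t → (b / a) ^ (1 / p) < y t → y' t ≤ -a * y t ^ p + b) :
    (y 0 ≤ (b / a) ^ (1 / p) → ∀ t, 0 ≤ t → y t ≤ (b / a) ^ (1 / p)) ∧
    ((b / a) ^ (1 / p) < y 0 → ∀ t, 0 ≤ t →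
      y t ≤ ((y 0 - (b / a) ^ (1 / p)) ^ (1 - p) + a * (p - 1) * t) ^ (-(1 / (p - 1)))
        + (b / a) ^ (1 / p)) := by
  have hba : 0 ≤ b / a := div_nonneg hb ha.le
  have hequil : a * ((b / a) ^ (1 / p)) ^ p = b := by
    rw [one_div, Real.rpow_inv_rpow hba (by linarith), mul_div_cancel₀ _ ha.ne']
  set c := (b / a) ^ (1 / p)
  have hc : 0 ≤ c := Real.rpow_nonneg hba _
  have hcont (t : ℝ) : ContinuousOn y (Icc 0 t) := hy.mono Icc_subset_Ici_self
  have hle (s : ℝ) (hs : 0 ≤ s) (hcs : c < y s) : y' s ≤ -a * y s ^ p + a * c ^ p :=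
    hequil.symm ▸ hineq s hs hcs
  refine ⟨fun hinit t ht => ?_, fun hinit t ht => ?_⟩
  · exact le_of_deriv_right_le_neg_mul_rpow ha hc hp.le (hcont t) (fun s hs => hy' s hs.1)
      (fun s hs => hle s hs.1) hinit ⟨ht, le_rfl⟩
  · simpa only [rpowDecay, sub_zero] using
      le_rpowDecay_add_of_deriv_right_le_neg_mul_rpow ha hc hp (hcont t)
        (fun s hs => hy' s hs.1) (fun s hs => hle s hs.1) hinit ⟨ht, le_rfl⟩

/-- Extension of Grönwall's inequality for the scalar ODE inequality
`y' ≤ -a y^p + b` with `p > 1` and `a, b > 0`.  The `max`/convention case split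
is expressed as a conjunction: if `y 0 ≤ (b/a)^(1/p)` the bound `(b/a)^(1/p)`
holds for all times, and otherwise the full algebraic-decay bound holds. -/
theorem gronwall_extension (a b p : ℝ) (ha : 0 < a) (hb : 0 < b) (hp : 1 < p)
    (y y' : ℝ → ℝ)
    (hy_nonneg : ∀ t, 0 ≤ t → 0 ≤ y t)
    (hderiv : ∀ t, 0 ≤ t → HasDerivAt y (y' t) t)
    (hderiv_cont : ContinuousOn y' (Set.Ici (0 : ℝ)))
    (hineq : ∀ t, 0 ≤ t → y' t ≤ -a * (y t) ^ p + b) :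
    (y 0 ≤ (b / a) ^ (1 / p) →
      ∀ t, 0 ≤ t → y t ≤ (b / a) ^ (1 / p)) ∧
    ((b / a) ^ (1 / p) < y 0 →
      ∀ t, 0 ≤ t →
        y t ≤ ((y 0 - (b / a) ^ (1 / p)) ^ (1 - p) + a * (p - 1) * t) ^ (-(1 / (p - 1)))
              + (b / a) ^ (1 / p)) :=
  gronwall_extension_general ha hb.le hp (fun t ht => (hderiv t ht).continuousAt.continuousWithinAt)
    (fun t ht => (hderiv t ht).hasDerivWithinAt) (fun t ht _ => hineq t ht)
end

section
/- Let k, δ, μ, c > 0 be constants and let y : [0, ∞) → [0, ∞) be continuously differentiable with y'(t) ≤ −μ·y(t)^{(k+δ)/k} + c for all t ≥ 0. Then for every t > 0, y(t) ≤ (k/(δ μ t))^{k/δ} + (c/μ)^{k/(k+δ)}. -/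
/-!
The function `u t = (k / (δ μ t)) ^ (k / δ)` is the solution of `u' = -μ u ^ ((k + δ) / k)` that
descends from `+∞` at time `0`. For `r` above the equilibrium `(c / μ) ^ (k / (k + δ))`,
superadditivity of `x ↦ x ^ ((k + δ) / k)` makes `u + r` a strict supersolution of
`y' = -μ y ^ ((k + δ) / k) + c`. As `u + r` starts from `+∞`, it lies above `y` at small times
whatever `y 0` is, and `y` can never cross it. Finally `r` decreases to the equilibrium.
-/

open Set Filter Topology

theorem image_le_of_deriv_right_lt_deriv_boundary_of_tendsto_atTop {f f' B B' : ℝ → ℝ} {a b : ℝ}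
    (hf : ContinuousOn f (Icc a b))
    (hf' : ∀ x ∈ Ioo a b, HasDerivWithinAt f (f' x) (Ici x) x)
    (hB_top : Tendsto B (𝓝[>] a) atTop) (hB : ContinuousOn B (Ioc a b))
    (hB' : ∀ x ∈ Ioo a b, HasDerivWithinAt B (B' x) (Ici x) x)
    (bound : ∀ x ∈ Ioo a b, f x = B x → f' x < B' x) ⦃x : ℝ⦄ (hx : x ∈ Ioc a b) :
    f x ≤ B x := by
  obtain ⟨M, hM⟩ := isCompact_Icc.bddAbove_image hf
  obtain ⟨s, hMs, has, hsx⟩ :=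
    ((hB_top.eventually_ge_atTop M).and (Ioo_mem_nhdsGT hx.1)).exists
  have hs_start : f s ≤ B s :=
    (hM (mem_image_of_mem f ⟨has.le, hsx.le.trans hx.2⟩)).trans hMs
  have h_Icc : Icc s x ⊆ Ioc a b := Icc_subset_Ioc has hx.2
  have h_Ico : Ico s x ⊆ Ioo a b := fun z hz => ⟨has.trans_le hz.1, hz.2.trans_le hx.2⟩
  exact image_le_of_deriv_right_lt_deriv_boundary' (hf.mono (h_Icc.trans Ioc_subset_Icc_self))
    (fun z hz => hf' z (h_Ico hz)) hs_start (hB.mono h_Icc) (fun z hz => hB' z (h_Ico hz))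
    (fun z hz => bound z (h_Ico hz)) (right_mem_Icc.2 hsx.le)

/-- The solution on `(0, ∞)` of the Bernoulli equation `u' = -μ u ^ ((k + δ) / k)` that descends
from `+∞` at time `0`. -/
noncomputable def bernoulliDecay (k δ μ t : ℝ) : ℝ := (k / (δ * μ * t)) ^ (k / δ)

section bernoulliDecay

variable {k δ μ t : ℝ}

theorem bernoulliDecay_pos (hk : 0 < k) (hδ : 0 < δ) (hμ : 0 < μ) (ht : 0 < t) :
    0 < bernoulliDecay k δ μ t := by
  unfold bernoulliDecay
  positivity

theorem hasDerivAt_bernoulliDecay (hk : 0 < k) (hδ : 0 < δ) (hμ : 0 < μ) (ht : 0 < t) :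
    HasDerivAt (bernoulliDecay k δ μ) (-μ * bernoulliDecay k δ μ t ^ ((k + δ) / k)) t := by
  set b := k / (δ * μ * t) with hb
  have hb_pos : 0 < b := by positivity
  have hpow : bernoulliDecay k δ μ t ^ ((k + δ) / k) = b ^ (k / δ - 1) * b ^ 2 := by
    rw [bernoulliDecay, ← hb, ← Real.rpow_mul hb_pos.le, ← Real.rpow_natCast,
      ← Real.rpow_add hb_pos]
    congr 1
    push_cast
    field_simp
    ring
  have hbase : HasDerivAt (fun s => k / (δ * μ * s)) (-(δ * μ / k) * b ^ 2) t := by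
    refine ((hasDerivAt_const t k).fun_div (hasDerivAt_const_mul (δ * μ))
      (by positivity)).congr_deriv ?_
    rw [hb]
    field_simp
    ring
  refine (hbase.rpow_const (p := k / δ) (Or.inl hb_pos.ne')).congr_deriv ?_
  rw [hpow, ← hb]
  field_simp

theorem tendsto_bernoulliDecay_nhdsGT_zero (hk : 0 < k) (hδ : 0 < δ) (hμ : 0 < μ) :
    Tendsto (bernoulliDecay k δ μ) (𝓝[>] 0) atTop := by
  have hbase : Tendsto (fun s => k / (δ * μ * s)) (𝓝[>] 0) atTop := by
    simpa only [← div_eq_mul_inv, div_div] using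
      tendsto_inv_nhdsGT_zero.const_mul_atTop (show 0 < k / (δ * μ) by positivity)
  exact (tendsto_rpow_atTop (by positivity)).comp hbase

end bernoulliDecay

theorem neg_mul_add_rpow_add_lt {p μ c r u : ℝ} (hp : 1 ≤ p) (hμ : 0 < μ) (hc : 0 ≤ c)
    (hu : 0 ≤ u) (hr : (c / μ) ^ p⁻¹ < r) : -μ * (u + r) ^ p + c < -μ * u ^ p := by
  have hr_nonneg : 0 ≤ r := (show 0 ≤ (c / μ) ^ p⁻¹ by positivity).trans hr.le
  have hcr : c < μ * r ^ p := by
    rwa [Real.rpow_inv_lt_iff_of_pos (by positivity) hr_nonneg (by positivity),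
      div_lt_iff₀' hμ] at hr
  have hsuper := mul_le_mul_of_nonneg_left (Real.add_rpow_le_rpow_add hu hr_nonneg hp) hμ.le
  linarith

theorem sobolev_regularization_core_general {k δ μ c t : ℝ}
    (hk : 0 < k) (hδ : 0 < δ) (hμ : 0 < μ) (hc : 0 ≤ c) {y y' : ℝ → ℝ}
    (hy : ContinuousOn y (Icc 0 t))
    (hderiv : ∀ s ∈ Ioo 0 t, HasDerivWithinAt y (y' s) (Ici s) s)
    (hineq : ∀ s ∈ Ioo 0 t, (c / μ) ^ (k / (k + δ)) < y s →
      y' s ≤ -μ * y s ^ ((k + δ) / k) + c) (ht : 0 < t) :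
    y t ≤ (k / (δ * μ * t)) ^ (k / δ) + (c / μ) ^ (k / (k + δ)) := by
  rw [← sub_le_iff_le_add']
  refine le_of_forall_gt_imp_ge_of_dense fun r hr => sub_le_iff_le_add'.2 ?_
  change y t ≤ bernoulliDecay k δ μ t + r
  have hB : ∀ s ∈ Ioc 0 t, HasDerivAt (fun s => bernoulliDecay k δ μ s + r)
      (-μ * bernoulliDecay k δ μ s ^ ((k + δ) / k)) s := fun s hs =>
    (hasDerivAt_bernoulliDecay hk hδ hμ hs.1).add_const r
  refine image_le_of_deriv_right_lt_deriv_boundary_of_tendsto_atTop hy hderiv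
    (tendsto_atTop_add_const_right _ r (tendsto_bernoulliDecay_nhdsGT_zero hk hδ hμ))
    (fun s hs => (hB s hs).continuousAt.continuousWithinAt)
    (fun s hs => (hB s (Ioo_subset_Ioc_self hs)).hasDerivWithinAt)
    (fun s hs hcontact => ?_) (right_mem_Ioc.2 ht)
  have hu := bernoulliDecay_pos hk hδ hμ hs.1
  have hp : 1 ≤ (k + δ) / k := (one_le_div hk).2 (by linarith)
  calc y' s ≤ -μ * y s ^ ((k + δ) / k) + c := hineq s hs (by linarith)
    _ = -μ * (bernoulliDecay k δ μ s + r) ^ ((k + δ) / k) + c := by rw [hcontact]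
    _ < -μ * bernoulliDecay k δ μ s ^ ((k + δ) / k) :=
      neg_mul_add_rpow_add_lt hp hμ hc hu.le (by rwa [inv_div])

/-- Analytic core of the Sobolev-regularization theorem: if
`y' ≤ -μ y^((k+δ)/k) + c` then for all `t > 0`,
`y t ≤ (k/(δ μ t))^(k/δ) + (c/μ)^(k/(k+δ))`. -/
theorem sobolev_regularization_core (k δ μ c : ℝ)
    (hk : 0 < k) (hδ : 0 < δ) (hμ : 0 < μ) (hc : 0 < c)
    (y y' : ℝ → ℝ)
    (hy_nonneg : ∀ t, 0 ≤ t → 0 ≤ y t)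
    (hderiv : ∀ t, 0 ≤ t → HasDerivAt y (y' t) t)
    (hderiv_cont : ContinuousOn y' (Set.Ici (0 : ℝ)))
    (hineq : ∀ t, 0 ≤ t → y' t ≤ -μ * (y t) ^ ((k + δ) / k) + c) :
    ∀ t, 0 < t →
      y t ≤ (k / (δ * μ * t)) ^ (k / δ) + (c / μ) ^ (k / (k + δ)) := fun _ =>
  sobolev_regularization_core_general hk hδ hμ hc.le
    (fun s hs => (hderiv s hs.1).continuousAt.continuousWithinAt)
    (fun s hs => (hderiv s hs.1.le).hasDerivWithinAt) (fun s hs _ => hineq s hs.1.le)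
end

section
/- Let D ≥ 1 be an integer, let V be a finite subset of ℤ^D, let v ∈ V, and equip ℤ^D with the ℓ¹ (graph) distance dist(i, v) = ‖i − v‖₁. Then for every κ > 1 the normalization constant Z_v = ∑_{i∈V} e^{−κ·dist(v,i)} satisfies 1 ≤ Z_v ≤ e^{2D−1}/(1 − e^{−(κ−1)}). -/
/-!
The weight `exp (-κ ‖i - v‖₁)` is a product over the coordinates, so its sum over the whole lattice
is the `D`-th power of the two-sided geometric series `∑ₙ exp (-κ |n|) = coth (κ / 2)`. For `κ ≥ 1`
this factor is at most `e`, so `Z_v ≤ e ^ D` for every `V`, finite or not; the exponent `2D - 1 ≥ D`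
and the denominator `1 - exp (-(κ - 1)) < 1` only weaken this.
-/

theorem hasSum_pow_natAbs {K : Type*} [NormedField K] {q : K} (hq : ‖q‖ < 1) :
    HasSum (fun n : ℤ => q ^ n.natAbs) ((1 + q) / (1 - q)) := by
  have hgeo : HasSum (fun n : ℕ => q ^ n) (1 - q)⁻¹ := hasSum_geometric_of_norm_lt_one hq
  have hq1 : 1 - q ≠ 0 := sub_ne_zero.mpr fun h => by simp [← h] at hq
  have hval : (1 + q) / (1 - q) = (1 - q)⁻¹ + (1 - q)⁻¹ - q ^ (0 : ℤ).natAbs := by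
    rw [Int.natAbs_zero, pow_zero]
    field_simp
    ring
  rw [hval]
  exact HasSum.of_nat_of_neg (by simpa only [Int.natAbs_natCast] using hgeo)
    (by simpa only [Int.natAbs_neg, Int.natAbs_natCast] using hgeo)

theorem hasSum_exp_neg_mul_abs_sub {κ : ℝ} (hκ : 0 < κ) (a : ℤ) :
    HasSum (fun n : ℤ => Real.exp (-κ * |(n : ℝ) - a|))
      ((1 + Real.exp (-κ)) / (1 - Real.exp (-κ))) := by
  have hq : ‖Real.exp (-κ)‖ < 1 := by
    rwa [Real.norm_of_nonneg (Real.exp_nonneg _), Real.exp_lt_one_iff, neg_lt_zero]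
  have hterm (n : ℤ) :
      Real.exp (-κ * |(n : ℝ) - a|) = Real.exp (-κ) ^ (n - a).natAbs := by
    rw [← Real.exp_nat_mul, Nat.cast_natAbs, Int.cast_abs, Int.cast_sub, mul_comm]
  simpa only [hterm, Function.comp_def, Equiv.subRight_apply] using
    (Equiv.subRight a).hasSum_iff.mpr (hasSum_pow_natAbs hq)

theorem one_add_exp_neg_div_one_sub_exp_neg_le_exp_one {κ : ℝ} (hκ : 1 ≤ κ) :
    (1 + Real.exp (-κ)) / (1 - Real.exp (-κ)) ≤ Real.exp 1 := by
  have he : 2.5 < Real.exp 1 := by linarith [Real.exp_one_gt_d9]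
  have hqe : Real.exp (-κ) * Real.exp 1 ≤ 1 := by
    rw [← Real.exp_add, Real.exp_le_one_iff]
    linarith
  -- At `κ = 1` the claim amounts to `e ≥ 1 + √2`, so the crude `e > 2.5` is enough.
  have hq : Real.exp (-κ) < 0.4 := by nlinarith [Real.exp_pos (-κ)]
  rw [div_le_iff₀ (by linarith)]
  linarith

section ProductSeries

variable {ι : Type*} [Fintype ι] {α : ι → Type*} {f : ∀ d, α d → ℝ} {a : ι → ℝ}

theorem sum_pi_prod_le_of_hasSum (hf : ∀ d n, 0 ≤ f d n) (h : ∀ d, HasSum (f d) (a d))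
    (s : Finset (∀ d, α d)) : ∑ x ∈ s, ∏ d, f d (x d) ≤ ∏ d, a d := by
  classical
  have hs : s ⊆ Fintype.piFinset fun d => s.image fun x => x d := fun x hx =>
    Fintype.mem_piFinset.mpr fun d => Finset.mem_image_of_mem (fun x => x d) hx
  calc ∑ x ∈ s, ∏ d, f d (x d)
      ≤ ∑ x ∈ Fintype.piFinset fun d => s.image fun x => x d, ∏ d, f d (x d) :=
        Finset.sum_le_sum_of_subset_of_nonneg hs fun x _ _ =>
          Finset.prod_nonneg fun d _ => hf d (x d)
    _ = ∏ d, ∑ n ∈ s.image fun x => x d, f d n := (Finset.prod_univ_sum _ _).symm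
    _ ≤ ∏ d, a d :=
        Finset.prod_le_prod (fun d _ => Finset.sum_nonneg fun n _ => hf d n)
          fun d _ => sum_le_hasSum _ (fun n _ => hf d n) (h d)

theorem hasSum_pi_prod_of_nonneg (hf : ∀ d n, 0 ≤ f d n) (h : ∀ d, HasSum (f d) (a d)) :
    HasSum (fun x : ∀ d, α d => ∏ d, f d (x d)) (∏ d, a d) := by
  classical
  have hsum : Summable fun x : ∀ d, α d => ∏ d, f d (x d) :=
    summable_of_sum_le (fun x => Finset.prod_nonneg fun d _ => hf d (x d))
      (sum_pi_prod_le_of_hasSum hf h)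
  -- Boxes are cofinal among finite sets, so the partial sums over boxes determine the value.
  have hbox : Filter.Tendsto (Fintype.piFinset : (∀ d, Finset (α d)) → Finset (∀ d, α d))
      Filter.atTop Filter.atTop :=
    Filter.tendsto_atTop_finset_of_monotone
      (fun s t hst => Fintype.piFinset_subset s t hst)
      fun x => ⟨fun d => {x d}, Fintype.mem_piFinset.mpr fun d => Finset.mem_singleton_self _⟩
  have heval (d : ι) : Filter.Tendsto (fun t : ∀ d, Finset (α d) => t d)
      Filter.atTop Filter.atTop :=
    Filter.tendsto_atTop_finset_of_monotone (Function.monotone_eval d)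
      fun n => ⟨Function.update ⊥ d {n}, by simp⟩
  have hprod : Filter.Tendsto (fun t : ∀ d, Finset (α d) => ∏ d, ∑ n ∈ t d, f d n)
      Filter.atTop (nhds (∏ d, a d)) :=
    tendsto_finsetProd _ fun d _ => (h d).comp (heval d)
  have hval := hsum.hasSum.comp hbox
  simp only [Function.comp_def, ← Finset.prod_univ_sum] at hval
  exact tendsto_nhds_unique hval hprod ▸ hsum.hasSum

end ProductSeries

theorem hasSum_exp_neg_mul_sum_abs_sub {ι : Type*} [Fintype ι] {κ : ℝ} (hκ : 0 < κ) (v : ι → ℤ) :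
    HasSum (fun i : ι → ℤ => Real.exp (-κ * ∑ d, |(i d : ℝ) - v d|))
      (((1 + Real.exp (-κ)) / (1 - Real.exp (-κ))) ^ Fintype.card ι) := by
  simpa only [Finset.mul_sum, Real.exp_sum, Finset.prod_const, Finset.card_univ] using
    hasSum_pi_prod_of_nonneg (fun _ _ => Real.exp_nonneg _)
      fun d => hasSum_exp_neg_mul_abs_sub hκ (v d)

theorem exp_one_pow_le_exp_two_mul_sub_one_div {n : ℕ} (hn : 1 ≤ n) {κ : ℝ} (hκ : 1 < κ) :
    Real.exp 1 ^ n ≤ Real.exp (2 * n - 1) / (1 - Real.exp (-(κ - 1))) := by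
  have hn' : (1 : ℝ) ≤ n := Nat.one_le_cast.mpr hn
  have hr : Real.exp (-(κ - 1)) < 1 := Real.exp_lt_one_iff.mpr (by linarith)
  calc Real.exp 1 ^ n = Real.exp n := Real.exp_one_pow n
    _ ≤ Real.exp (2 * n - 1) := Real.exp_le_exp.mpr (by linarith)
    _ ≤ Real.exp (2 * n - 1) / (1 - Real.exp (-(κ - 1))) :=
        le_div_self (Real.exp_nonneg _) (sub_pos.mpr hr)
          (sub_le_self _ (Real.exp_nonneg _))

theorem normalization_constant_bounds_general {ι : Type*} [Fintype ι] [Nonempty ι]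
    {V : Set (ι → ℤ)} {v : ι → ℤ} (hv : v ∈ V) {κ : ℝ} (hκ : 1 < κ) :
    Summable (fun i : V => Real.exp (-κ * ∑ d, |(i.1 d : ℝ) - v d|)) ∧
    1 ≤ ∑' i : V, Real.exp (-κ * ∑ d, |(i.1 d : ℝ) - v d|) ∧
    ∑' i : V, Real.exp (-κ * ∑ d, |(i.1 d : ℝ) - v d|) ≤
      Real.exp (2 * Fintype.card ι - 1) / (1 - Real.exp (-(κ - 1))) := by
  have hκ0 : 0 < κ := one_pos.trans hκ
  have hlattice := hasSum_exp_neg_mul_sum_abs_sub hκ0 v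
  have hV := hlattice.summable.subtype V
  have hq : Real.exp (-κ) < 1 := Real.exp_lt_one_iff.mpr (neg_lt_zero.mpr hκ0)
  refine ⟨hV, ?_, ?_⟩
  · calc (1 : ℝ) = Real.exp (-κ * ∑ d, |(v d : ℝ) - v d|) := by simp
      _ ≤ _ := hV.le_tsum ⟨v, hv⟩ fun _ _ => Real.exp_nonneg _
  · calc _ ≤ ∑' i : ι → ℤ, Real.exp (-κ * ∑ d, |(i d : ℝ) - v d|) :=
          hlattice.summable.tsum_subtype_le _ V fun _ => Real.exp_nonneg _
      _ = ((1 + Real.exp (-κ)) / (1 - Real.exp (-κ))) ^ Fintype.card ι := hlattice.tsum_eq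
      _ ≤ Real.exp 1 ^ Fintype.card ι :=
          pow_le_pow_left₀ (div_nonneg (by positivity) (sub_nonneg.mpr hq.le))
            (one_add_exp_neg_div_one_sub_exp_neg_le_exp_one hκ.le) _
      _ ≤ _ := exp_one_pow_le_exp_two_mul_sub_one_div Fintype.card_pos hκ

open Finset in
/-- Bounds on the normalization constant `Z_v = ∑_{i ∈ V} e^{-κ dist(v,i)}` of
the concentrated Sobolev norm on a finite subset `V ⊆ ℤ^D` with the `ℓ¹`
distance: `1 ≤ Z_v ≤ e^(2D-1) / (1 - e^(-(κ-1)))` for every `κ > 1`. -/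
theorem normalization_constant_bounds (D : ℕ) (hD : 1 ≤ D)
    (V : Finset (Fin D → ℤ)) (v : Fin D → ℤ) (hv : v ∈ V)
    (κ : ℝ) (hκ : 1 < κ) :
    1 ≤ ∑ i ∈ V, Real.exp (-κ * ∑ d, |(i d : ℝ) - (v d : ℝ)|) ∧
    ∑ i ∈ V, Real.exp (-κ * ∑ d, |(i d : ℝ) - (v d : ℝ)|) ≤
      Real.exp (2 * D - 1) / (1 - Real.exp (-(κ - 1))) := by
  have : Nonempty (Fin D) := Fin.pos_iff_nonempty.mp hD
  simpa only [Finset.tsum_subtype' V fun i => Real.exp (-κ * ∑ d, |(i d : ℝ) - v d|),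
    Fintype.card_fin] using (normalization_constant_bounds_general (mem_coe.mpr hv) hκ).2
end

section
/- For every natural number n ≥ 0 and every integer k ≥ 1, n(n−1)·((n+1)^k − (n−1)^k) ≥ 2(n+1)^{k+1} − 6(n+1)^k. -/
/-!
With `k = m + 1`, the difference of the two sides at `x` is
`x (x - 1)² ((x + 1)ᵐ - (x - 1)ᵐ) + 4 (x + 1)ᵐ`, and both summands are nonnegative for `x ≥ 0`
because `|x - 1| ≤ x + 1`. Peeling one factor off the powers is what makes the factor `x - 1` a
square, so `x < 1` is not a separate case.
-/

theorem sub_pow_le_add_pow {R : Type*} [Ring R] [LinearOrder R] [IsStrictOrderedRing R]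
    {a b : R} (ha : 0 ≤ a) (hb : 0 ≤ b) (m : ℕ) : (a - b) ^ m ≤ (a + b) ^ m := by
  have habs : |a - b| ≤ a + b := by
    simpa only [abs_of_nonneg ha, abs_of_nonneg hb] using abs_sub a b
  calc (a - b) ^ m ≤ |(a - b) ^ m| := le_abs_self _
    _ = |a - b| ^ m := abs_pow _ _
    _ ≤ (a + b) ^ m := pow_le_pow_left₀ (abs_nonneg _) habs m

theorem two_photon_difference_eq {R : Type*} [CommRing R] (x : R) (m : ℕ) :
    x * (x - 1) * ((x + 1) ^ (m + 1) - (x - 1) ^ (m + 1)) -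
        (2 * (x + 1) ^ (m + 2) - 6 * (x + 1) ^ (m + 1)) =
      x * (x - 1) ^ 2 * ((x + 1) ^ m - (x - 1) ^ m) + 4 * (x + 1) ^ m := by
  ring

theorem two_photon_dissipation_scalar_general {R : Type*} [CommRing R] [LinearOrder R]
    [IsStrictOrderedRing R] {x : R} (hx : 0 ≤ x) {k : ℕ} (hk : 1 ≤ k) :
    2 * (x + 1) ^ (k + 1) - 6 * (x + 1) ^ k ≤
      x * (x - 1) * ((x + 1) ^ k - (x - 1) ^ k) := by
  obtain ⟨m, rfl⟩ := Nat.exists_eq_add_of_le' hk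
  have hpow : 0 ≤ (x + 1) ^ m - (x - 1) ^ m :=
    sub_nonneg.2 (sub_pow_le_add_pow hx zero_le_one m)
  rw [← sub_nonneg, two_photon_difference_eq]
  positivity

/-- Scalar inequality underlying Sobolev-regularization of two-photon
dissipation: `n(n-1)((n+1)^k - (n-1)^k) ≥ 2(n+1)^(k+1) - 6(n+1)^k`. -/
theorem two_photon_dissipation_scalar (n : ℕ) (k : ℕ) (hk : 1 ≤ k) :
    (n : ℝ) * ((n : ℝ) - 1) * (((n : ℝ) + 1) ^ k - ((n : ℝ) - 1) ^ k) ≥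
      2 * ((n : ℝ) + 1) ^ (k + 1) - 6 * ((n : ℝ) + 1) ^ k :=
  two_photon_dissipation_scalar_general n.cast_nonneg hk
end

section
/- Let k ≥ 2 be a real parameter and ℓ ≥ 1 an integer. Then for all real x, g_ℓ(x−ℓ) ≤ g_ℓ(x). -/
/-!
For `x ≥ 0` the two non-zero branches of `g_ℓ` are both `p (x + 1) - p (x + 1 - ℓ)`, where `p` is
the truncated power `t ↦ (max t 0) ^ k`. When `k ≥ 1`, `p` is convex on the whole line, so its
increments over intervals of fixed length `ℓ` increase with `x`. Hence `g_ℓ` is monotone on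
`[0, ∞)`, and since it is nonnegative there and zero before, it is monotone on `ℝ`.
-/

/-- The discrete difference `g_ℓ(x) = f(x) - f(x-ℓ)` of
`f(x) = (x+1)^k · 1_{x ≥ -1}`:
`g_ℓ(x) = (x+1)^k - (x-ℓ+1)^k` for `x ≥ ℓ-1`, `(x+1)^k` for `0 ≤ x < ℓ-1`,
and `0` for `x < 0`. -/
noncomputable def gDiff (k : ℝ) (ℓ : ℕ) (x : ℝ) : ℝ :=
  if x < 0 then 0
  else if x < (ℓ : ℝ) - 1 then (x + 1) ^ k
  else (x + 1) ^ k - (x - ℓ + 1) ^ k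

section ConvexIncrements

variable {𝕜 E β : Type*} [AddCommGroup β] [PartialOrder β] [IsOrderedAddMonoid β]

theorem convexOn_map_add_map_swap_le [Semiring 𝕜] [PartialOrder 𝕜] [AddCommMonoid E] [SMul 𝕜 E]
    [Module 𝕜 β] {s : Set E} {f : E → β} (hf : ConvexOn 𝕜 s f) {x y : E} (hx : x ∈ s)
    (hy : y ∈ s) {a b : 𝕜} (ha : 0 ≤ a) (hb : 0 ≤ b) (hab : a + b = 1) :
    f (a • x + b • y) + f (b • x + a • y) ≤ f x + f y :=
  calc f (a • x + b • y) + f (b • x + a • y)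
      ≤ (a • f x + b • f y) + (b • f x + a • f y) :=
        add_le_add (hf.2 hx hy ha hb hab) (hf.2 hx hy hb ha (by rwa [add_comm]))
    _ = (a + b) • f x + (a + b) • f y := by simp only [add_smul]; abel
    _ = f x + f y := by simp only [hab, one_smul]

theorem monotoneOn_sub_comp_sub_of_convexOn [Field 𝕜] [LinearOrder 𝕜] [IsStrictOrderedRing 𝕜]
    [Module 𝕜 β] {s : Set 𝕜} {f : 𝕜 → β} (hf : ConvexOn 𝕜 s f) {h : 𝕜} (hh : 0 ≤ h) :
    MonotoneOn (fun x ↦ f x - f (x - h)) {x | x ∈ s ∧ x - h ∈ s} := by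
  rintro x ⟨-, hxh⟩ y ⟨hy, -⟩ hxy
  have hx_mem : x ∈ Set.Icc (x - h) y := ⟨sub_le_self x hh, hxy⟩
  obtain ⟨a, b, ha, hb, hab, hx_eq⟩ := (Convex.mem_Icc (hx_mem.1.trans hx_mem.2)).1 hx_mem
  have hy_eq : b * (x - h) + a * y = y - h := by
    linear_combination (x - h + y) * hab - hx_eq
  have hswap := convexOn_map_add_map_swap_le hf hxh hy ha hb hab
  simp only [smul_eq_mul, hx_eq, hy_eq] at hswap
  rwa [sub_le_sub_iff, add_comm (f y)]

end ConvexIncrements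

/-- The truncated power function `t ↦ t₊ ^ k`. For `k ≠ 0` it vanishes on the negative half-line;
for `k = 0` it is the constant `1`, because `0 ^ 0 = 1`. -/
noncomputable def truncatedPower (k t : ℝ) : ℝ :=
  max t 0 ^ k

theorem truncatedPower_of_nonneg (k : ℝ) {t : ℝ} (ht : 0 ≤ t) : truncatedPower k t = t ^ k := by
  rw [truncatedPower, max_eq_left ht]

theorem truncatedPower_of_nonpos {k t : ℝ} (hk : k ≠ 0) (ht : t ≤ 0) :
    truncatedPower k t = 0 := by
  rw [truncatedPower, max_eq_right ht, Real.zero_rpow hk]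

theorem convexOn_truncatedPower {k : ℝ} (hk : 1 ≤ k) :
    ConvexOn ℝ Set.univ (truncatedPower k) := by
  have hmax : ConvexOn ℝ Set.univ fun t : ℝ ↦ max t 0 :=
    (convexOn_id convex_univ).sup (convexOn_const 0 convex_univ)
  have himage : (fun t : ℝ ↦ max t 0) '' Set.univ = Set.Ici 0 := by
    rw [Set.image_univ]
    exact Set.Subset.antisymm (Set.range_subset_iff.2 fun t ↦ le_max_right t 0)
      fun t ht ↦ ⟨t, max_eq_left ht⟩
  exact ConvexOn.comp (himage ▸ convexOn_rpow hk) hmax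
    (himage ▸ Real.monotoneOn_rpow_Ici_of_exponent_nonneg (zero_le_one.trans hk))

theorem gDiff_of_neg (k : ℝ) (ℓ : ℕ) {x : ℝ} (hx : x < 0) : gDiff k ℓ x = 0 :=
  if_pos hx

theorem gDiff_of_nonneg {k : ℝ} (hk : k ≠ 0) (ℓ : ℕ) {x : ℝ} (hx : 0 ≤ x) :
    gDiff k ℓ x = truncatedPower k (x + 1) - truncatedPower k (x + 1 - ℓ) := by
  rw [gDiff, if_neg hx.not_gt, truncatedPower_of_nonneg k (by linarith : 0 ≤ x + 1)]
  split_ifs with hxℓ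
  · rw [truncatedPower_of_nonpos hk (by linarith), sub_zero]
  · rw [truncatedPower_of_nonneg k (by linarith), sub_add_eq_add_sub]

theorem gDiff_nonneg {k : ℝ} (hk : 0 ≤ k) (ℓ : ℕ) (x : ℝ) : 0 ≤ gDiff k ℓ x := by
  unfold gDiff
  split_ifs with hx hxℓ
  · exact le_rfl
  · exact Real.rpow_nonneg (by linarith) k
  · have hle : x - ℓ + 1 ≤ x + 1 := by gcongr; exact sub_le_self x ℓ.cast_nonneg
    exact sub_nonneg.2 (Real.rpow_le_rpow (by linarith) hle hk)

theorem gDiff_shift_mono_general {k : ℝ} (hk : 1 ≤ k) (ℓ : ℕ) : Monotone (gDiff k ℓ) := by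
  intro x y hxy
  have hk0 : 0 < k := zero_lt_one.trans_le hk
  rcases lt_or_ge x 0 with hx | hx
  · rw [gDiff_of_neg k ℓ hx]
    exact gDiff_nonneg hk0.le ℓ y
  · rw [gDiff_of_nonneg hk0.ne' ℓ hx, gDiff_of_nonneg hk0.ne' ℓ (hx.trans hxy)]
    exact monotoneOn_sub_comp_sub_of_convexOn (convexOn_truncatedPower hk) ℓ.cast_nonneg
      ⟨trivial, trivial⟩ ⟨trivial, trivial⟩ (add_le_add_left hxy 1)

/-- Monotonicity of `g_ℓ` under shifts: for `k ≥ 2` and `ℓ ≥ 1`,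
`g_ℓ(x - ℓ) ≤ g_ℓ(x)` for all real `x`. -/
theorem gDiff_shift_mono (k : ℝ) (hk : 2 ≤ k) (ℓ : ℕ) (hℓ : 1 ≤ ℓ) (x : ℝ) :
    gDiff k ℓ (x - ℓ) ≤ gDiff k ℓ x :=
  gDiff_shift_mono_general (one_le_two.trans hk) ℓ (sub_le_self x ℓ.cast_nonneg)
end

section
/- Let k ≥ 1 be a real parameter and ℓ ≥ 1 an integer. Then ℓ·(x+1)^{k−1} ≤ g_ℓ(x) for all real x ≥ ℓ−1, and (x+1)^k ≤ g_ℓ(x) for all real 0 ≤ x < ℓ−1. -/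
theorem gDiff_of_lt (k : ℝ) {ℓ : ℕ} {x : ℝ} (hx₀ : 0 ≤ x) (hx : x < (ℓ : ℝ) - 1) :
    gDiff k ℓ x = (x + 1) ^ k := by
  rw [gDiff, if_neg hx₀.not_gt, if_pos hx]

theorem gDiff_of_le (k : ℝ) {ℓ : ℕ} {x : ℝ} (hx₀ : 0 ≤ x) (hx : (ℓ : ℝ) - 1 ≤ x) :
    gDiff k ℓ x = (x + 1) ^ k - (x - ℓ + 1) ^ k := by
  rw [gDiff, if_neg hx₀.not_gt, if_neg hx.not_gt]

theorem mul_rpow_sub_one {a k : ℝ} (ha : 0 ≤ a) (hk : k ≠ 0) : a * a ^ (k - 1) = a ^ k := by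
  rw [← Real.rpow_one_add' ha (by simpa using hk), add_sub_cancel]

theorem sub_mul_rpow_sub_one_le_rpow_sub_rpow {a b k : ℝ} (hk : 1 ≤ k) (hb : 0 ≤ b)
    (hab : b ≤ a) : (a - b) * a ^ (k - 1) ≤ a ^ k - b ^ k := by
  have hk₀ : k ≠ 0 := by positivity
  have hmono : b ^ (k - 1) ≤ a ^ (k - 1) := Real.rpow_le_rpow hb hab (sub_nonneg.2 hk)
  calc (a - b) * a ^ (k - 1) = a * a ^ (k - 1) - b * a ^ (k - 1) := sub_mul ..
    _ ≤ a * a ^ (k - 1) - b * b ^ (k - 1) := by gcongr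
    _ = a ^ k - b ^ k := by
        rw [mul_rpow_sub_one (hb.trans hab) hk₀, mul_rpow_sub_one hb hk₀]

/-- Lower bounds on `g_ℓ` for `k ≥ 1`: `ℓ (x+1)^(k-1) ≤ g_ℓ(x)` for
`x ≥ ℓ-1`, and `(x+1)^k ≤ g_ℓ(x)` for `0 ≤ x < ℓ-1`. -/
theorem gDiff_lower_bounds (k : ℝ) (hk : 1 ≤ k) (ℓ : ℕ) (hℓ : 1 ≤ ℓ) :
    (∀ x : ℝ, (ℓ : ℝ) - 1 ≤ x → (ℓ : ℝ) * (x + 1) ^ (k - 1) ≤ gDiff k ℓ x) ∧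
    (∀ x : ℝ, 0 ≤ x → x < (ℓ : ℝ) - 1 → (x + 1) ^ k ≤ gDiff k ℓ x) := by
  refine ⟨fun x hx ↦ ?_, fun x hx₀ hx ↦ (gDiff_of_lt k hx₀ hx).ge⟩
  have hℓ' : (1 : ℝ) ≤ ℓ := mod_cast hℓ
  calc (ℓ : ℝ) * (x + 1) ^ (k - 1)
      = ((x + 1) - (x - ℓ + 1)) * (x + 1) ^ (k - 1) := by ring
    _ ≤ (x + 1) ^ k - (x - ℓ + 1) ^ k :=
        sub_mul_rpow_sub_one_le_rpow_sub_rpow hk (by linarith) (by linarith)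
    _ = gDiff k ℓ x := (gDiff_of_le k (by linarith) hx).symm
end
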